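/- Let ℓ > r ≥ 2 be integers. Then π(H_{K_ℓ}^(r)) = (r!/(ℓ−1)^r)·C(ℓ−1, r); that is, ex(n, H_{K_ℓ}^(r))/C(n, r) converges as n → ∞ to (r!/(ℓ−1)^r)·C(ℓ−1, r). -/

import Mathlib

/-!
Fix `ℓ` and write `t = ℓ - 1`. The complete balanced `t`-partite `r`-graph contains no expansion
of `K_ℓ`, since the parts would properly `t`-colour the core `K_ℓ`.

For the upper bound, join two vertices of an `r`-graph by a kernel edge when their link cannot be
covered by a certain constant number of vertices. A copy of `K_ℓ` in the kernel graph extends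
greedily to a copy of its expansion. So the kernel graph of an expansion-free `r`-graph is
`K_ℓ`-free and, by Zykov's theorem, has at most `C(t, r) (n / t) ^ r` cliques of size `r`. Every
other edge of the `r`-graph contains a pair that is not a kernel edge, and since the link of such a
pair has a bounded cover there are only `O(n ^ (r - 1))` of these.
-/

open Finset

/-- An `r`-graph: a set of edges each of which has exactly `r` vertices. -/
def IsRGraph {α : Type*} (r : ℕ) (G : Finset (Finset α)) : Prop :=
  ∀ e ∈ G, e.card = r

/-- `G` contains a (not necessarily induced) copy of `H`, i.e. a subgraph isomorphic to `H`. -/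
def ContainsCopy {α β : Type*} [DecidableEq β]
    (H : Finset (Finset α)) (G : Finset (Finset β)) : Prop :=
  ∃ f : α → β, Function.Injective f ∧ ∀ e ∈ H, e.image f ∈ G

/-- There is a homomorphism from `H` to `G`. -/
def ContainsHom {α β : Type*} [DecidableEq β]
    (H : Finset (Finset α)) (G : Finset (Finset β)) : Prop :=
  ∃ f : α → β, ∀ e ∈ H, e.image f ∈ G

/-- The Turán number `ex(n, H)` for `r`-graphs: the maximum number of edges in an
`n`-vertex `H`-free `r`-graph. -/
noncomputable def exNum {α : Type*} (r n : ℕ) (H : Finset (Finset α)) : ℕ :=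
  sSup {m | ∃ G : Finset (Finset (Fin n)), IsRGraph r G ∧ ¬ ContainsCopy H G ∧ G.card = m}

/-- The two endpoints of an edge of a simple graph, as a `Finset`. -/
def sym2ToFinset {α : Type*} [Fintype α] [DecidableEq α] (e : Sym2 α) : Finset α :=
  Finset.univ.filter (· ∈ e)

/-- The expansion `H_F^(r)` of a 2-graph `F`: each edge of `F` is enlarged with a new set of
`r - 2` vertices, distinct edges getting disjoint sets of new vertices. -/
def expansion {α : Type*} [Fintype α] [DecidableEq α] (r : ℕ)
    (F : SimpleGraph α) [DecidableRel F.Adj] :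
    Finset (Finset (α ⊕ (F.edgeFinset × Fin (r - 2)))) :=
  F.edgeFinset.attach.image (fun e =>
    (sym2ToFinset e.1).image Sum.inl ∪
      (Finset.univ : Finset (Fin (r - 2))).image (fun i => Sum.inr (e, i)))

/-- The complete balanced `l`-partite `r`-graph `T_r(n, l)` on vertex set `Fin n`,
with vertex classes the residue classes modulo `l` (which differ in size by at most 1):
its edges are all `r`-sets meeting each class in at most one vertex. -/
def turanGraph (r n l : ℕ) : Finset (Finset (Fin n)) :=
  (Finset.univ.powersetCard r).filter
    (fun e => ∀ u ∈ e, ∀ v ∈ e, (u : ℕ) % l = (v : ℕ) % l → u = v)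

/-- `t_r(n, l)`, the number of edges of `T_r(n, l)`. -/
def turanNum (r n l : ℕ) : ℕ := (turanGraph r n l).card

/-- Two `r`-graphs on `Fin n` are `ε`-close if some relabelling of the first one has
symmetric difference at most `ε·C(n,r)` with the second one. -/
def EpsClose (r n : ℕ) (ε : ℝ) (G₁ G₂ : Finset (Finset (Fin n))) : Prop :=
  ∃ σ : Fin n ≃ Fin n,
    ((((G₁.image fun e => e.image σ) \ G₂) ∪ (G₂ \ (G₁.image fun e => e.image σ))).card : ℝ)
      ≤ ε * (n.choose r)

/-- `G` contains a member of the decomposition family `𝓕_F` (w.r.t. proper `ℓ`-colourings of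
`F`) as a subgraph, with all its vertices placed inside `S`.  A member of `𝓕_F` is obtained
from `F` by deleting the vertices of `ℓ - 2` colour classes of a proper `ℓ`-colouring of `F`. -/
def ContainsDecompMemberOn {α β : Type*} [DecidableEq β] (ℓ : ℕ) (F : SimpleGraph α)
    (G : Finset (Finset β)) (S : Set β) : Prop :=
  ∃ c : α → Fin ℓ, (∀ ⦃u v⦄, F.Adj u v → c u ≠ c v) ∧
    ∃ i j : Fin ℓ, i ≠ j ∧
      ∃ f : {v : α // c v = i ∨ c v = j} → β, Function.Injective f ∧
        (∀ v, f v ∈ S) ∧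
        ∀ u v : {v : α // c v = i ∨ c v = j}, F.Adj u.1 v.1 → ({f u, f v} : Finset β) ∈ G

/-- `biex(n, F) = ex(n, 𝓕_F)`: the maximum number of edges in an `n`-vertex 2-graph containing
no member of the decomposition family of `F` (w.r.t. proper `ℓ`-colourings) as a subgraph. -/
noncomputable def biex {α : Type*} (ℓ : ℕ) (F : SimpleGraph α) (n : ℕ) : ℕ :=
  sSup {m | ∃ G : Finset (Finset (Fin n)), IsRGraph 2 G ∧
    ¬ ContainsDecompMemberOn ℓ F G Set.univ ∧ G.card = m}

/-- The Lagrangian of an `r`-graph `G`: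
`λ(G) = max { Σ_{e ∈ G} Π_{i ∈ e} w i }` over all legal weightings `w`. -/
noncomputable def lagrangian {α : Type*} [Fintype α] (G : Finset (Finset α)) : ℝ :=
  sSup {x : ℝ | ∃ w : α → ℝ, (∀ i, 0 ≤ w i) ∧ (∑ i, w i) = 1 ∧
    x = ∑ e ∈ G, ∏ i ∈ e, w i}

section CliqueCounting

variable {V : Type*} [Fintype V] (G : SimpleGraph V) [DecidableRel G.Adj]

/-- The common neighbourhood of a vertex set `B`. When `B` is a clique, its members are the
vertices that extend `B` to a larger clique. -/
def commonNeighborFinset (B : Finset V) : Finset V := {w | ∀ u ∈ B, G.Adj w u}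

variable {G} in
lemma mem_commonNeighborFinset {B : Finset V} {w : V} :
    w ∈ commonNeighborFinset G B ↔ ∀ u ∈ B, G.Adj w u := by
  simp [commonNeighborFinset]

variable {G} in
lemma notMem_of_mem_commonNeighborFinset {B : Finset V} {w : V}
    (hw : w ∈ commonNeighborFinset G B) : w ∉ B :=
  fun hwB ↦ G.irrefl (mem_commonNeighborFinset.1 hw w hwB)

variable {G} in
lemma commonNeighborFinset_anti {A B : Finset V} (h : A ⊆ B) :
    commonNeighborFinset G B ⊆ commonNeighborFinset G A :=
  fun _ hw ↦ mem_commonNeighborFinset.2 fun u hu ↦ mem_commonNeighborFinset.1 hw u (h hu)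

variable [DecidableEq V]

lemma sum_cliqueFinset_sum_commonNeighborFinset {M : Type*} [AddCommMonoid M] (s : ℕ)
    (f : Finset V → V → M) :
    ∑ B ∈ G.cliqueFinset s, ∑ w ∈ commonNeighborFinset G B, f B w =
      ∑ A ∈ G.cliqueFinset (s + 1), ∑ w ∈ A, f (A.erase w) w := by
  rw [sum_sigma', sum_sigma']
  refine sum_bij' (fun p _ ↦ ⟨insert p.2 p.1, p.2⟩) (fun p _ ↦ ⟨p.1.erase p.2, p.2⟩) ?_ ?_ ?_ ?_ ?_
  · rintro ⟨B, w⟩ h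
    simp only [mem_sigma, SimpleGraph.mem_cliqueFinset_iff] at h ⊢
    exact ⟨h.1.insert (mem_commonNeighborFinset.1 h.2), mem_insert_self _ _⟩
  · rintro ⟨A, w⟩ h
    simp only [mem_sigma, SimpleGraph.mem_cliqueFinset_iff, mem_commonNeighborFinset] at h ⊢
    refine ⟨h.1.erase_of_mem h.2, fun u hu ↦ ?_⟩
    exact h.1.isClique h.2 (mem_of_mem_erase hu) (ne_of_mem_erase hu).symm
  · rintro ⟨B, w⟩ h
    simp [erase_insert (notMem_of_mem_commonNeighborFinset (mem_sigma.1 h).2)]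
  · rintro ⟨A, w⟩ h
    simp [insert_erase (mem_sigma.1 h).2]
  · rintro ⟨B, w⟩ h
    simp [erase_insert (notMem_of_mem_commonNeighborFinset (mem_sigma.1 h).2)]

lemma sum_card_commonNeighborFinset (s : ℕ) :
    ∑ B ∈ G.cliqueFinset s, #(commonNeighborFinset G B) = (s + 1) * #(G.cliqueFinset (s + 1)) := by
  calc ∑ B ∈ G.cliqueFinset s, #(commonNeighborFinset G B)
      = ∑ A ∈ G.cliqueFinset (s + 1), #A := by
        simpa only [sum_const, smul_eq_mul, mul_one] using
          sum_cliqueFinset_sum_commonNeighborFinset (M := ℕ) G s fun _ _ ↦ 1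
    _ = (s + 1) * #(G.cliqueFinset (s + 1)) := by
        rw [sum_const_nat fun A hA ↦ (SimpleGraph.mem_cliqueFinset_iff.1 hA).card_eq, mul_comm]

/-- A vertex outside the common neighbourhood of `A` is a common neighbour of `A.erase u` for at
most one `u ∈ A`, namely its only non-neighbour in `A`. -/
lemma sum_card_commonNeighborFinset_erase_add_le (A : Finset V) :
    ∑ u ∈ A, #(commonNeighborFinset G (A.erase u)) + #(commonNeighborFinset G A) ≤
      Fintype.card V + #A * #(commonNeighborFinset G A) := by
  set N := commonNeighborFinset G A
  let D u := commonNeighborFinset G (A.erase u) \ N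
  have hD : (A : Set V).PairwiseDisjoint D := by
    intro u _ v _ huv
    rw [Function.onFun, disjoint_left]
    intro w hwu hwv
    simp only [D, N, mem_sdiff, mem_commonNeighborFinset, mem_erase] at hwu hwv
    refine hwu.2 fun x hx ↦ ?_
    rcases eq_or_ne x u with rfl | hxu
    exacts [hwv.1 x ⟨huv, hx⟩, hwu.1 x ⟨hxu, hx⟩]
  have hsplit (u : V) : #(commonNeighborFinset G (A.erase u)) = #(D u) + #N :=
    (card_sdiff_add_card_eq_card (commonNeighborFinset_anti (erase_subset u A))).symm
  have hcard : #(A.biUnion D) + #N ≤ Fintype.card V := by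
    rw [← card_union_of_disjoint
      ((disjoint_biUnion_left _ _ _).2 fun _ _ ↦ sdiff_disjoint)]
    exact card_le_univ _
  simp only [hsplit, sum_add_distrib, sum_const, smul_eq_mul]
  rw [card_biUnion hD] at hcard
  omega

/-- The **Moon–Moser inequality** between the numbers of cliques of three consecutive sizes. -/
lemma sq_mul_card_cliqueFinset_succ_le (s : ℕ) :
    ((s + 1) * #(G.cliqueFinset (s + 1))) ^ 2 ≤
      #(G.cliqueFinset s) * (Fintype.card V * #(G.cliqueFinset (s + 1)) +
        s * ((s + 2) * #(G.cliqueFinset (s + 2)))) := by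
  rw [← sum_card_commonNeighborFinset]
  refine sq_sum_le_card_mul_sum_sq.trans (Nat.mul_le_mul_left _ ?_)
  calc ∑ B ∈ G.cliqueFinset s, #(commonNeighborFinset G B) ^ 2
      = ∑ A ∈ G.cliqueFinset (s + 1), ∑ u ∈ A, #(commonNeighborFinset G (A.erase u)) := by
        simpa [sq] using
          sum_cliqueFinset_sum_commonNeighborFinset G s fun B _ ↦ #(commonNeighborFinset G B)
    _ ≤ ∑ A ∈ G.cliqueFinset (s + 1),
          (Fintype.card V + s * #(commonNeighborFinset G A)) := by
        refine sum_le_sum fun A hA ↦ ?_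
        have h := sum_card_commonNeighborFinset_erase_add_le G A
        rw [(SimpleGraph.mem_cliqueFinset_iff.1 hA).card_eq, add_one_mul] at h
        omega
    _ = Fintype.card V * #(G.cliqueFinset (s + 1)) +
          s * ((s + 2) * #(G.cliqueFinset (s + 2))) := by
        rw [sum_add_distrib, ← mul_sum, sum_card_commonNeighborFinset]
        simp [mul_comm]

variable {G} {t : ℕ}

lemma mul_card_cliqueFinset_succ_le_of_cliqueFree (hG : G.CliqueFree (t + 1)) (s : ℕ) :
    (s + 1) * t * #(G.cliqueFinset (s + 1)) ≤ Fintype.card V * (t - s) * #(G.cliqueFinset s) := by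
  induction hj : t - s generalizing s with
  | zero => simp [SimpleGraph.cliqueFinset_eq_empty_iff.2 (hG.mono (show t + 1 ≤ s + 1 by omega))]
  | succ j ih =>
    have hnext := ih (s + 1) (by omega)
    have hMM := sq_mul_card_cliqueFinset_succ_le G s
    obtain rfl : t = s + (j + 1) := by omega
    set a := #(G.cliqueFinset s)
    set b := #(G.cliqueFinset (s + 1))
    set c := #(G.cliqueFinset (s + 2))
    set n := Fintype.card V
    rcases b.eq_zero_or_pos with hb | hb
    · simp [hb]
    refine Nat.le_of_mul_le_mul_left ?_ (Nat.mul_pos s.succ_pos hb)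
    calc (s + 1) * b * ((s + 1) * (s + (j + 1)) * b)
        = (s + (j + 1)) * ((s + 1) * b) ^ 2 := by ring
      _ ≤ (s + (j + 1)) * (a * (n * b + s * ((s + 2) * c))) := by gcongr
      _ = a * ((s + (j + 1)) * n * b + s * ((s + 1 + 1) * (s + (j + 1)) * c)) := by ring
      _ ≤ a * ((s + (j + 1)) * n * b + s * (n * j * b)) := by gcongr
      _ = (s + 1) * b * (n * (j + 1) * a) := by ring

/-- **Zykov's theorem** on the number of `s`-cliques of a `K_{t+1}`-free graph. -/
lemma pow_mul_card_cliqueFinset_le_of_cliqueFree (hG : G.CliqueFree (t + 1)) (s : ℕ) :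
    t ^ s * #(G.cliqueFinset s) ≤ Fintype.card V ^ s * t.choose s := by
  induction s with
  | zero => simpa using G.card_cliqueFinset_le (n := 0)
  | succ s ih =>
    refine Nat.le_of_mul_le_mul_left ?_ s.succ_pos
    calc (s + 1) * (t ^ (s + 1) * #(G.cliqueFinset (s + 1)))
        = t ^ s * ((s + 1) * t * #(G.cliqueFinset (s + 1))) := by ring
      _ ≤ t ^ s * (Fintype.card V * (t - s) * #(G.cliqueFinset s)) :=
        Nat.mul_le_mul_left _ (mul_card_cliqueFinset_succ_le_of_cliqueFree hG s)
      _ = Fintype.card V * (t - s) * (t ^ s * #(G.cliqueFinset s)) := by ring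
      _ ≤ Fintype.card V * (t - s) * (Fintype.card V ^ s * t.choose s) :=
        Nat.mul_le_mul_left _ ih
      _ = Fintype.card V ^ (s + 1) * (t.choose s * (t - s)) := by ring
      _ = (s + 1) * (Fintype.card V ^ (s + 1) * t.choose (s + 1)) := by
        rw [← Nat.choose_succ_right_eq]; ring

end CliqueCounting

section Expansion

lemma exists_pairwiseDisjoint_of_forall_exists_disjoint {ι β : Type*} {k : ℕ}
    (Q : ι → Set (Finset β)) (C : Finset β) (T : Finset ι)
    (hk : ∀ i ∈ T, ∀ X ∈ Q i, #X ≤ k)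
    (hQ : ∀ i ∈ T, ∀ S : Finset β, #S ≤ #C + #T * k → ∃ X ∈ Q i, Disjoint X S) :
    ∃ φ : ι → Finset β, (∀ i ∈ T, φ i ∈ Q i ∧ Disjoint (φ i) C) ∧
      (T : Set ι).PairwiseDisjoint φ := by
  classical
  induction T using Finset.induction_on with
  | empty => exact ⟨fun _ ↦ ∅, by simp, by simp⟩
  | insert a T ha ih =>
    rw [card_insert_of_notMem ha, add_one_mul] at hQ
    obtain ⟨φ, hφ, hdisj⟩ := ih (fun i hi ↦ hk i (mem_insert_of_mem hi))
      fun i hi S hS ↦ hQ i (mem_insert_of_mem hi) S (by omega)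
    have hused : #(C ∪ T.biUnion φ) ≤ #C + (#T * k + k) := by
      have := card_biUnion_le_card_mul T φ k
        fun i hi ↦ hk i (mem_insert_of_mem hi) _ (hφ i hi).1
      have := card_union_le C (T.biUnion φ)
      omega
    obtain ⟨X, hX, hXdisj⟩ := hQ a (mem_insert_self a T) _ hused
    rw [disjoint_union_right, disjoint_biUnion_right] at hXdisj
    have hupdate : ∀ i ∈ T, Function.update φ a X i = φ i :=
      fun i hi ↦ Function.update_of_ne (ne_of_mem_of_not_mem hi ha) _ _
    refine ⟨Function.update φ a X, forall_mem_insert .. |>.2 ⟨?_, fun i hi ↦ ?_⟩, ?_⟩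
    · simpa using ⟨hX, hXdisj.1⟩
    · simpa only [hupdate i hi] using hφ i hi
    · rw [coe_insert, Set.pairwiseDisjoint_insert_of_notMem (mod_cast ha)]
      refine ⟨fun i hi j hj hij ↦ ?_, fun j hj ↦ ?_⟩
      · simpa only [Function.onFun, hupdate i hi, hupdate j hj] using hdisj hi hj hij
      · simpa only [Function.update_self, hupdate j hj] using hXdisj.2 j hj

variable {α V : Type*} [Fintype α] [DecidableEq α] [DecidableEq V] {F : SimpleGraph α}
  [DecidableRel F.Adj] {r : ℕ} {𝒢 : Finset (Finset V)}

lemma sym2ToFinset_mk (a b : α) : sym2ToFinset s(a, b) = {a, b} := by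
  ext; simp [sym2ToFinset]

lemma containsCopy_expansion_of_pairwise_disjoint (g : α ↪ V) (φ : F.edgeFinset → Finset V)
    (hcard : ∀ e, #(φ e) = r - 2) (hφ : Pairwise (Function.onFun Disjoint φ))
    (hφg : ∀ e, Disjoint (φ e) (univ.map g))
    (hmem : ∀ e : F.edgeFinset, (sym2ToFinset e.1).map g ∪ φ e ∈ 𝒢) :
    ContainsCopy (expansion r F) 𝒢 := by
  let x e := ((φ e).equivFinOfCardEq (hcard e)).symm
  refine ⟨Sum.elim g fun p ↦ x p.1 p.2, g.injective.sumElim ?_ ?_, ?_⟩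
  · rintro ⟨e, i⟩ ⟨e', i'⟩ (h : (x e i : V) = x e' i')
    obtain rfl : e = e' := by
      by_contra hne
      exact disjoint_left.1 (hφ hne) (x e i).2 (h ▸ (x e' i').2)
    rw [(x e).injective (Subtype.ext h)]
  · rintro a ⟨e, i⟩ (h : g a = x e i)
    exact disjoint_left.1 (hφg e) (x e i).2 (h ▸ mem_map_of_mem g (mem_univ a))
  · simp only [expansion, forall_mem_image, mem_attach, forall_const]
    intro e
    have hx : (univ.image fun i ↦ (x e i : V)) = φ e := by
      ext v
      simp only [mem_image, mem_univ, true_and]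
      exact ⟨fun ⟨i, hi⟩ ↦ hi ▸ (x e i).2, fun hv ↦ ⟨(x e).symm ⟨v, hv⟩, by simp⟩⟩
    convert hmem e
    simp only [image_union, image_image, map_eq_image]
    exact congrArg₂ _ rfl hx

/-- The graph of the pairs `u ≠ v` whose link in `𝒢` cannot be covered by `M` vertices: whatever
set of at most `M` vertices is forbidden, some edge through `u` and `v` avoids it elsewhere. -/
def kernelGraph (𝒢 : Finset (Finset V)) (M : ℕ) : SimpleGraph V where
  Adj u v := u ≠ v ∧
    ∀ S : Finset V, #S ≤ M → ∃ e ∈ 𝒢, u ∈ e ∧ v ∈ e ∧ Disjoint (e \ {u, v}) S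
  symm := ⟨fun u v h ↦ ⟨h.1.symm, fun S hS ↦ by
    obtain ⟨e, he, hu, hv, hd⟩ := h.2 S hS
    exact ⟨e, he, hv, hu, pair_comm u v ▸ hd⟩⟩⟩
  loopless := ⟨fun _ h ↦ h.1 rfl⟩

open scoped SimpleGraph in
/-- The new vertices of the edges of `F` are chosen greedily, one edge at a time. -/
lemma containsCopy_expansion_of_isContained_kernelGraph (h𝒢 : IsRGraph r 𝒢)
    (hF : F ⊑ kernelGraph 𝒢 (Fintype.card (α ⊕ F.edgeFinset × Fin (r - 2)))) :
    ContainsCopy (expansion r F) 𝒢 := by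
  obtain ⟨g⟩ := hF
  let Q : F.edgeFinset → Set (Finset V) := fun e ↦
    {X | #X = r - 2 ∧ (sym2ToFinset e.1).map g.toEmbedding ∪ X ∈ 𝒢}
  obtain ⟨φ, hφ, hdisj⟩ := exists_pairwiseDisjoint_of_forall_exists_disjoint (k := r - 2) Q
    (univ.map g.toEmbedding) univ (fun _ _ _ hX ↦ hX.1.le) (by
      rintro ⟨e, he⟩ - S hS
      induction e with | _ a b
      have hadj : (kernelGraph 𝒢 _).Adj (g a) (g b) :=
        g.toHom.map_adj (SimpleGraph.mem_edgeFinset.1 he)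
      obtain ⟨e, heG, ha, hb, hd⟩ := hadj.2 S (by
        simpa only [card_map, card_univ, Fintype.card_sum, Fintype.card_prod, Fintype.card_fin]
          using hS)
      have hsub : {g a, g b} ⊆ e := by simp [insert_subset_iff, ha, hb]
      refine ⟨e \ {g a, g b}, ⟨?_, ?_⟩, hd⟩
      · rw [card_sdiff_of_subset hsub, h𝒢 e heG, card_pair hadj.1]
      · have hcore : (sym2ToFinset s(a, b)).map g.toEmbedding = {g a, g b} := by
          rw [sym2ToFinset_mk, map_insert, map_singleton]; rfl
        rwa [hcore, union_sdiff_of_subset hsub])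
  simp only [mem_univ, forall_const] at hφ
  rw [coe_univ, Set.PairwiseDisjoint, Set.pairwise_univ] at hdisj
  exact containsCopy_expansion_of_pairwise_disjoint g.toEmbedding φ (fun e ↦ (hφ e).1.1) hdisj
    (fun e ↦ (hφ e).2) fun e ↦ (hφ e).1.2

variable [Fintype V]

lemma pow_card_mul_card_filter_superset_le (T : Finset V) :
    Fintype.card V ^ #T * #{e ∈ powersetCard r univ | T ⊆ e} ≤ Fintype.card V ^ r := by
  rcases le_or_gt #T r with hT | hT
  · calc Fintype.card V ^ #T * #{e ∈ powersetCard r univ | T ⊆ e}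
        = Fintype.card V ^ #T * (Fintype.card V - #T).choose (r - #T) := by
          rw [card_filter_powersetCard_subset _ _ _ (subset_univ T) hT, card_univ]
      _ ≤ Fintype.card V ^ #T * Fintype.card V ^ (r - #T) := by
          gcongr
          exact (Nat.choose_le_pow _ _).trans (Nat.pow_le_pow_left (Nat.sub_le _ _) _)
      _ = Fintype.card V ^ r := by rw [← pow_add, Nat.add_sub_cancel' hT]
  · have hempty : {e ∈ powersetCard r (univ : Finset V) | T ⊆ e} = ∅ :=
      filter_eq_empty_iff.2 fun e he hTe ↦
        hT.not_ge ((card_le_card hTe).trans (mem_powersetCard.1 he).2.le)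
    simp [hempty]

lemma card_filter_mem_pair_le_of_not_adj_kernelGraph {M : ℕ} {u v : V} (h𝒢 : IsRGraph r 𝒢)
    (huv : u ≠ v) (hadj : ¬ (kernelGraph 𝒢 M).Adj u v) :
    Fintype.card V ^ 3 * #{e ∈ 𝒢 | u ∈ e ∧ v ∈ e} ≤ M * Fintype.card V ^ r := by
  obtain ⟨S, hS, hcover⟩ : ∃ S : Finset V, #S ≤ M ∧
      ∀ e ∈ 𝒢, u ∈ e → v ∈ e → ¬ Disjoint (e \ {u, v}) S := by
    simpa [kernelGraph, huv] using hadj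
  have hsub : {e ∈ 𝒢 | u ∈ e ∧ v ∈ e} ⊆
      (S \ {u, v}).biUnion fun x ↦ {e ∈ powersetCard r univ | {u, v, x} ⊆ e} := by
    intro e he
    obtain ⟨he, hu, hv⟩ := mem_filter.1 he
    obtain ⟨x, hx, hxS⟩ := not_disjoint_iff.1 (hcover e he hu hv)
    rw [mem_sdiff] at hx
    simp only [mem_biUnion, mem_sdiff, mem_filter, mem_powersetCard_univ, insert_subset_iff,
      singleton_subset_iff]
    exact ⟨x, ⟨hxS, hx.2⟩, h𝒢 e he, hu, hv, hx.1⟩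
  have htriple : ∀ x ∈ S \ {u, v}, Fintype.card V ^ 3 *
      #{e ∈ powersetCard r (univ : Finset V) | {u, v, x} ⊆ e} ≤ Fintype.card V ^ r := by
    intro x hx
    simp only [mem_sdiff, mem_insert, mem_singleton, not_or] at hx
    have h3 : #{u, v, x} = 3 :=
      card_eq_three.2 ⟨u, v, x, huv, Ne.symm hx.2.1, Ne.symm hx.2.2, rfl⟩
    exact h3 ▸ pow_card_mul_card_filter_superset_le {u, v, x}
  calc Fintype.card V ^ 3 * #{e ∈ 𝒢 | u ∈ e ∧ v ∈ e}
      ≤ Fintype.card V ^ 3 *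
          ∑ x ∈ S \ {u, v}, #{e ∈ powersetCard r (univ : Finset V) | {u, v, x} ⊆ e} :=
        Nat.mul_le_mul_left _ ((card_le_card hsub).trans card_biUnion_le)
    _ ≤ #(S \ {u, v}) * Fintype.card V ^ r := by
        rw [mul_sum, ← smul_eq_mul]
        exact sum_le_card_nsmul _ _ _ htriple
    _ ≤ M * Fintype.card V ^ r :=
        Nat.mul_le_mul_right _ ((card_le_card sdiff_subset).trans hS)

/-- An edge of `𝒢` that is not a clique of the kernel graph contains one of at most `n ^ 2` pairs
outside the kernel graph, and each of these lies in `O(n ^ (r - 3))` edges. -/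
lemma card_mul_card_le_card_cliqueFinset_kernelGraph_add {M : ℕ} (h𝒢 : IsRGraph r 𝒢)
    [DecidableRel (kernelGraph 𝒢 M).Adj] :
    Fintype.card V * #𝒢 ≤
      Fintype.card V * #((kernelGraph 𝒢 M).cliqueFinset r) + M * Fintype.card V ^ r := by
  set n := Fintype.card V
  let K := kernelGraph 𝒢 M
  let P : Finset (V × V) := {p | p.1 ≠ p.2 ∧ ¬ K.Adj p.1 p.2}
  let 𝓛 := P.biUnion fun p ↦ {e ∈ 𝒢 | p.1 ∈ e ∧ p.2 ∈ e}
  have hsub : 𝒢 ⊆ K.cliqueFinset r ∪ 𝓛 := by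
    intro e he
    by_contra hcon
    simp only [mem_union, SimpleGraph.mem_cliqueFinset_iff, 𝓛, P, mem_biUnion, mem_filter, mem_univ,
      true_and, Prod.exists, not_or, not_exists, not_and] at hcon
    refine hcon.1 ⟨fun u hu v hv huv ↦ ?_, h𝒢 e he⟩
    by_contra hadj
    exact hcon.2 u v ⟨huv, hadj⟩ he hu hv
  have h𝓛 : n * #𝓛 ≤ M * n ^ r := by
    rcases n.eq_zero_or_pos with hn | hn
    · simp [hn]
    refine Nat.le_of_mul_le_mul_left ?_ (Nat.pow_pos (n := 2) hn)
    calc n ^ 2 * (n * #𝓛) = n ^ 3 * #𝓛 := by ring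
      _ ≤ n ^ 3 * ∑ p ∈ P, #{e ∈ 𝒢 | p.1 ∈ e ∧ p.2 ∈ e} :=
        Nat.mul_le_mul_left _ card_biUnion_le
      _ ≤ #P * (M * n ^ r) := by
        rw [mul_sum, ← smul_eq_mul]
        refine sum_le_card_nsmul _ _ _ fun p hp ↦ ?_
        obtain ⟨hne, hadj⟩ := (mem_filter.1 hp).2
        exact card_filter_mem_pair_le_of_not_adj_kernelGraph h𝒢 hne hadj
      _ ≤ n ^ 2 * (M * n ^ r) :=
        Nat.mul_le_mul_right _ ((card_le_univ P).trans_eq (by simp [n, sq]))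
  calc n * #𝒢 ≤ n * (#(K.cliqueFinset r) + #𝓛) :=
        Nat.mul_le_mul_left _ ((card_le_card hsub).trans (card_union_le _ _))
    _ ≤ n * #(K.cliqueFinset r) + M * n ^ r := by rw [mul_add]; gcongr

lemma card_le_of_not_containsCopy_expansion_top [Nonempty V] {t : ℕ} (ht : 0 < t)
    (h𝒢 : IsRGraph r 𝒢)
    (hfree : ¬ ContainsCopy (expansion r (⊤ : SimpleGraph (Fin (t + 1)))) 𝒢) :
    (#𝒢 : ℝ) ≤ (t.choose r / t ^ r + Fintype.card
      (Fin (t + 1) ⊕ (⊤ : SimpleGraph (Fin (t + 1))).edgeFinset × Fin (r - 2)) / Fintype.card V) *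
        Fintype.card V ^ r := by
  classical
  set M := Fintype.card (Fin (t + 1) ⊕ (⊤ : SimpleGraph (Fin (t + 1))).edgeFinset × Fin (r - 2))
  have hclique : (kernelGraph 𝒢 M).CliqueFree (t + 1) := by
    by_contra hK
    exact hfree (containsCopy_expansion_of_isContained_kernelGraph h𝒢
      ((SimpleGraph.not_cliqueFree_iff_top_isContained _).1 hK))
  have hZykov : (t : ℝ) ^ r * #((kernelGraph 𝒢 M).cliqueFinset r) ≤
      Fintype.card V ^ r * t.choose r :=
    mod_cast pow_mul_card_cliqueFinset_le_of_cliqueFree hclique r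
  have hsplit : (Fintype.card V : ℝ) * #𝒢 ≤
      Fintype.card V * #((kernelGraph 𝒢 M).cliqueFinset r) + M * Fintype.card V ^ r :=
    mod_cast card_mul_card_le_card_cliqueFinset_kernelGraph_add h𝒢
  have hn : (0 : ℝ) < Fintype.card V := mod_cast Fintype.card_pos
  calc (#𝒢 : ℝ)
      ≤ #((kernelGraph 𝒢 M).cliqueFinset r) + M / Fintype.card V * Fintype.card V ^ r := by
        refine le_of_mul_le_mul_left (hsplit.trans_eq ?_) hn
        field_simp
    _ ≤ t.choose r / t ^ r * Fintype.card V ^ r + M / Fintype.card V * Fintype.card V ^ r := by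
        gcongr
        rw [div_mul_eq_mul_div, le_div_iff₀' (by positivity), mul_comm (t.choose r : ℝ)]
        exact hZykov
    _ = _ := by ring

end Expansion

section TuranGraph

lemma card_filter_image_eq_and_card_eq {V ι : Type*} [Fintype V] [DecidableEq ι] (c : V → ι)
    (A : Finset ι) : #{e : Finset V | e.image c = A ∧ #e = #A} = ∏ a ∈ A, #{v | c v = a} := by
  classical
  rw [← prod_coe_sort A, ← Fintype.card_piFinset]
  symm
  have hinj {f : A → V} (hf : ∀ a, c (f a) = a) : Function.Injective f :=
    fun a b hab ↦ Subtype.ext (by rw [← hf a, ← hf b, hab])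
  have hcard {f : A → V} (hf : ∀ a, c (f a) = a) : #(univ.image f) = #A := by
    rw [card_image_of_injective _ (hinj hf), card_univ, Fintype.card_coe]
  refine card_nbij (fun f ↦ univ.image f) (fun f hf ↦ ?_) (fun f hf g hg hfg ↦ ?_) fun e he ↦ ?_
  · have hf : ∀ a, c (f a) = a := by simpa using hf
    refine mem_coe.2 (mem_filter.2 ⟨mem_univ _, ?_, hcard hf⟩)
    simp [image_image, Function.comp_def, hf]
  · have hf : ∀ a, c (f a) = a := by simpa using hf
    have hg : ∀ a, c (g a) = a := by simpa using hg
    have hfg : univ.image f = univ.image g := hfg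
    funext a
    obtain ⟨b, -, hb⟩ : ∃ b ∈ univ, g b = f a :=
      mem_image.1 (hfg ▸ mem_image_of_mem f (mem_univ a))
    rw [← hb, show b = a from Subtype.ext (by rw [← hg b, hb, hf])]
  · obtain ⟨rfl, he⟩ : e.image c = A ∧ #e = #A := by simpa using he
    choose f hfe hf using fun a : e.image c ↦ mem_image.1 a.2
    refine ⟨f, by simpa using hf, eq_of_subset_of_card_le ?_ ?_⟩
    · exact image_subset_iff.2 fun a _ ↦ hfe a
    · rw [hcard hf, he]

variable (r n : ℕ) {t : ℕ}

variable {r n} in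
lemma mem_turanGraph {e : Finset (Fin n)} :
    e ∈ turanGraph r n t ↔ #e = r ∧ Set.InjOn (fun v : Fin n ↦ (v : ℕ) % t) e := by
  simp [turanGraph, Set.InjOn]

lemma isRGraph_turanGraph : IsRGraph r (turanGraph r n t) :=
  fun _ he ↦ (mem_turanGraph.1 he).1

lemma turanNum_eq_sum_prod (ht : 0 < t) :
    turanNum r n t =
      ∑ A ∈ powersetCard r (range t), ∏ a ∈ A, #{v : Fin n | (v : ℕ) % t = a} := by
  rw [turanNum, card_eq_sum_card_fiberwise (f := image fun v : Fin n ↦ (v : ℕ) % t)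
    (t := powersetCard r (range t))]
  · refine sum_congr rfl fun A hA ↦ ?_
    rw [← card_filter_image_eq_and_card_eq]
    congr 1
    ext e
    simp only [mem_filter, mem_turanGraph, mem_univ, true_and, ← card_image_iff]
    have := (mem_powersetCard.1 hA).2
    constructor
    · rintro ⟨⟨he, -⟩, rfl⟩
      exact ⟨rfl, he.trans this.symm⟩
    · rintro ⟨rfl, he⟩
      exact ⟨⟨he.trans this, he.symm⟩, rfl⟩
  · intro e he
    obtain ⟨he, hinj⟩ := mem_turanGraph.1 he
    refine mem_powersetCard.2 ⟨image_subset_iff.2 fun v _ ↦ mem_range.2 (Nat.mod_lt _ ht), ?_⟩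
    rw [card_image_of_injOn hinj, he]

lemma div_le_card_filter_mod_eq {a : ℕ} (ha : a < t) :
    n / t ≤ #{v : Fin n | (v : ℕ) % t = a} := by
  calc n / t ≤ n.count (· ≡ a [MOD t]) := by
        rw [Nat.count_modEq_card _ (by omega)]
        exact Nat.le_add_right _ _
    _ = #{v : Fin n | (v : ℕ) % t = a} := by
        rw [Nat.count_eq_card_filter_range, card_filter, card_filter,
          Fin.sum_univ_eq_sum_range fun v ↦ if v % t = a then 1 else 0]
        simp only [Nat.ModEq, Nat.mod_eq_of_lt ha]

lemma choose_mul_div_pow_le_turanNum (ht : 0 < t) :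
    t.choose r * (n / t) ^ r ≤ turanNum r n t := by
  rw [turanNum_eq_sum_prod r n ht]
  calc t.choose r * (n / t) ^ r = ∑ A ∈ powersetCard r (range t), ∏ _a ∈ A, n / t := by
        rw [sum_congr rfl fun A hA ↦ by rw [prod_const, (mem_powersetCard.1 hA).2]]
        simp
    _ ≤ _ := by
        gcongr with A hA a ha
        exact div_le_card_filter_mod_eq n (mem_range.1 ((mem_powersetCard.1 hA).1 ha))

variable {r n} in
lemma not_containsCopy_expansion_turanGraph {α : Type*} [Fintype α] [DecidableEq α]
    {F : SimpleGraph α} [DecidableRel F.Adj] (ht : 0 < t) (hF : ¬ F.Colorable t) :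
    ¬ ContainsCopy (expansion r F) (turanGraph r n t) := by
  rintro ⟨f, hf, hcopy⟩
  refine hF ⟨SimpleGraph.Coloring.mk (fun a ↦ ⟨(f (.inl a) : ℕ) % t, Nat.mod_lt _ ht⟩) ?_⟩
  intro a b hab hcolor
  have hedge := hcopy _ (mem_image_of_mem _
    (mem_attach _ ⟨s(a, b), SimpleGraph.mem_edgeFinset.2 hab⟩))
  have hinj := (mem_turanGraph.1 hedge).2
  have hfab : f (.inl a) = f (.inl b) :=
    hinj (by simp [sym2ToFinset_mk]) (by simp [sym2ToFinset_mk]) (Fin.val_eq_of_eq hcolor)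
  exact hab.ne (Sum.inl_injective (hf hfab))

end TuranGraph

section TuranNumber

variable {α : Type*} {r n : ℕ} {H : Finset (Finset α)}

lemma card_le_exNum {G : Finset (Finset (Fin n))} (hG : IsRGraph r G) (hfree : ¬ ContainsCopy H G) :
    #G ≤ exNum r n H := by
  refine le_csSup ⟨Fintype.card (Finset (Fin n)), ?_⟩ ⟨G, hG, hfree, rfl⟩
  rintro _ ⟨G', -, -, rfl⟩
  exact card_le_univ G'

lemma exNum_le {x : ℝ} (hx : 0 ≤ x)
    (h : ∀ G : Finset (Finset (Fin n)), IsRGraph r G → ¬ ContainsCopy H G → (#G : ℝ) ≤ x) :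
    (exNum r n H : ℝ) ≤ x := by
  refine (Nat.le_floor_iff hx).1 (csSup_le' ?_)
  rintro _ ⟨G, hG, hfree, rfl⟩
  exact Nat.le_floor (h G hG hfree)

end TuranNumber

section Asymptotics

open Filter Topology

lemma tendsto_pow_div_choose (r : ℕ) :
    Tendsto (fun n : ℕ ↦ (n : ℝ) ^ r / n.choose r) atTop (𝓝 r.factorial) := by
  have hne : ∀ᶠ n : ℕ in atTop, (n.choose r : ℝ) ≠ 0 := by
    filter_upwards [eventually_ge_atTop r] with n hn
    exact mod_cast (Nat.choose_pos hn).ne'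
  have h := (Asymptotics.isEquivalent_iff_tendsto_one hne).1 (isEquivalent_choose r).symm
  refine (mul_one (r.factorial : ℝ) ▸ h.const_mul (r.factorial : ℝ)).congr fun n ↦ ?_
  have : (r.factorial : ℝ) ≠ 0 := mod_cast r.factorial_ne_zero
  simp only [Pi.div_apply]
  field_simp

lemma tendsto_natDiv_div_self (t : ℕ) :
    Tendsto (fun n : ℕ ↦ ((n / t : ℕ) : ℝ) / n) atTop (𝓝 (1 / t)) := by
  refine ((tendsto_nat_floor_mul_div_atTop (R := ℝ) (a := 1 / t) (by positivity)).comp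
    tendsto_natCast_atTop_atTop).congr fun n ↦ ?_
  rw [Function.comp_apply, one_div_mul_eq_div, Nat.floor_div_eq_div]

lemma tendsto_choose_mul_natDiv_pow_div_choose (r t : ℕ) :
    Tendsto (fun n : ℕ ↦ ((t.choose r * (n / t) ^ r : ℕ) : ℝ) / n.choose r) atTop
      (𝓝 (r.factorial / (t : ℝ) ^ r * t.choose r)) := by
  have h := (((tendsto_natDiv_div_self t).pow r).mul (tendsto_pow_div_choose r)).const_mul
    (t.choose r : ℝ)
  rw [show (t.choose r : ℝ) * ((1 / t) ^ r * r.factorial) =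
    r.factorial / (t : ℝ) ^ r * t.choose r by rw [one_div, inv_pow]; ring] at h
  refine h.congr' ?_
  filter_upwards [eventually_gt_atTop 0] with n hn
  have : (n : ℝ) ≠ 0 := mod_cast hn.ne'
  push_cast
  rw [div_pow]
  field_simp

lemma tendsto_add_div_mul_pow_div_choose (r : ℕ) (a b : ℝ) :
    Tendsto (fun n : ℕ ↦ (a + b / n) * (n : ℝ) ^ r / n.choose r) atTop (𝓝 (a * r.factorial)) := by
  have h := ((tendsto_const_div_atTop_nhds_zero_nat b).const_add a).mul (tendsto_pow_div_choose r)
  simpa only [add_zero, mul_div_assoc] using h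

/-- For `ℓ ≤ r` the limit is `0`: the expansion is then `r`-partite. -/
theorem turan_density_expanded_clique_general (r ℓ : ℕ) (_hr : 2 ≤ r) (hℓ : 2 ≤ ℓ) :
    Tendsto (fun n ↦ (exNum r n (expansion r (⊤ : SimpleGraph (Fin ℓ))) : ℝ) / n.choose r) atTop
      (𝓝 ((r.factorial : ℝ) / ((ℓ - 1 : ℕ) : ℝ) ^ r * ((ℓ - 1).choose r : ℝ))) := by
  obtain ⟨t, rfl⟩ : ∃ t, ℓ = t + 1 := ⟨ℓ - 1, by omega⟩
  have ht : 0 < t := by omega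
  have hlower (n : ℕ) : t.choose r * (n / t) ^ r ≤
      exNum r n (expansion r (⊤ : SimpleGraph (Fin (t + 1)))) :=
    (choose_mul_div_pow_le_turanNum r n ht).trans <| card_le_exNum (isRGraph_turanGraph r n) <|
      not_containsCopy_expansion_turanGraph ht fun h ↦ by
        simpa using h.card_le_of_pairwise_adj id fun _ _ ↦ id
  have hupper := tendsto_add_div_mul_pow_div_choose r (t.choose r / t ^ r) (Fintype.card
    (Fin (t + 1) ⊕ (⊤ : SimpleGraph (Fin (t + 1))).edgeFinset × Fin (r - 2)))
  rw [div_mul_comm] at hupper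
  rw [Nat.add_sub_cancel]
  refine tendsto_of_tendsto_of_tendsto_of_le_of_le'
    (tendsto_choose_mul_natDiv_pow_div_choose r t) hupper ?_ ?_
  · exact .of_forall fun n ↦ by gcongr; exact hlower n
  · filter_upwards [eventually_gt_atTop 0] with n hn
    have : Nonempty (Fin n) := ⟨⟨0, hn⟩⟩
    gcongr
    refine exNum_le (by positivity) fun G hG hfree ↦ ?_
    simpa only [Fintype.card_fin] using card_le_of_not_containsCopy_expansion_top ht hG hfree

end Asymptotics

/-- **Theorem (Mubayi).**  Let `ℓ > r ≥ 2`.  Then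
`π(H_{K_ℓ}^(r)) = (r!/(ℓ-1)^r)·C(ℓ-1, r)`, i.e. `ex(n, H_{K_ℓ}^(r))/C(n,r)` converges to
this value as `n → ∞`. -/
theorem turan_density_expanded_clique (r ℓ : ℕ) (hr : 2 ≤ r) (hrl : r < ℓ) :
    Filter.Tendsto
      (fun n => (exNum r n (expansion r (⊤ : SimpleGraph (Fin ℓ))) : ℝ) / (n.choose r))
      Filter.atTop
      (nhds ((r.factorial : ℝ) / ((ℓ - 1 : ℕ) : ℝ) ^ r * ((ℓ - 1).choose r : ℝ))) :=
  turan_density_expanded_clique_general r ℓ hr (hr.trans hrl.le)
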